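/- Nerve theorem for convex sets (statement): if F is a finite family of closed convex sets in Euclidean space ℝⁿ, then the geometric realization of the nerve of F is homotopy equivalent to the union ⋃ F. -/

import Mathlib

/-!
Write `K` for the realization of the nerve of a finite family `A` of closed convex sets and `U` for
its union.  Explicit maps `φ : U → K` and `ψ : K → U` are built, each composite of which is joined
to the identity by straight lines.

* `φ x` has weights proportional to `max 0 (δ x - d_S x)`, where `d_S` is a continuous function
  vanishing exactly on `S` and `δ > 0` is so small that the members with `d_S x < δ x` always have a
  common point (`exists_radius`).  The weight of `S` at `x` is maximal exactly when `x ∈ S`.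
* `ψ` is a barycentric-subdivision map (`exists_toUnion`): it averages chosen points
  `P σ ∈ ⋂ σ` over the superlevel sets `σ` of `w`.  All these `σ` contain every index of maximal
  weight, so by convexity `ψ w` lies in every member of maximal weight.

Hence `ψ (φ x)` lies in every member containing `x`, and the segment from `x` to `ψ (φ x)` stays
in `U`.  Conversely, put `v = φ (ψ w)`.  A member of maximal `w`-weight contains `ψ w`, so it has
positive `v`-weight, and the normalized product `w * v` is a point of `K` whose support lies in the
supports of both `w` and `v`.  The segments from `w` to `w * v` and from `w * v` to `v` stay in the
simplices spanned by these supports, so `id ≃ φ ∘ ψ`.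
-/

namespace ConvexNerve

variable {ι E X : Type*} [Fintype ι]

/-! ### The realization of the nerve and homotopies along segments -/

/-- The geometric realization of the nerve of the family `A`: points of the standard simplex on the
index set whose support indexes a subfamily with a common point. -/
def realization (A : ι → Set E) : Set (ι → ℝ) :=
  {w | (∀ S, 0 ≤ w S) ∧ (∑ S, w S = 1) ∧ (⋂ S ∈ {S : ι | w S ≠ 0}, A S).Nonempty}

/-- Two maps into a subspace are homotopic if the segments joining their values stay in it. -/
theorem homotopic_of_segment {V : Type*} [AddCommGroup V] [Module ℝ V] [TopologicalSpace V]
    [ContinuousAdd V] [ContinuousSMul ℝ V] [TopologicalSpace X] {s : Set V} (f g : C(X, s))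
    (h : ∀ x, segment ℝ (f x : V) (g x) ⊆ s) : f.Homotopic g := by
  refine ⟨⟨⟨fun p => ⟨(1 - (p.1 : ℝ)) • (f p.2 : V) + (p.1 : ℝ) • (g p.2 : V), ?_⟩, ?_⟩, ?_, ?_⟩⟩
  · exact h p.2 ⟨1 - (p.1 : ℝ), p.1, by linarith [p.1.2.2], p.1.2.1, by ring, rfl⟩
  · fun_prop
  · intro x; ext; simp
  · intro x; ext; simp

/-- Two maps to the nerve are homotopic if the supports of the values of the second are contained
in those of the first: the segments stay in the simplex spanned by the larger support. -/
theorem homotopic_of_support [TopologicalSpace X] {A : ι → Set E} (f g : C(X, realization A))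
    (h : ∀ x S, (f x : ι → ℝ) S = 0 → (g x : ι → ℝ) S = 0) : f.Homotopic g := by
  refine homotopic_of_segment f g fun x => ?_
  rintro _ ⟨a, b, ha, hb, hab, rfl⟩
  obtain ⟨hf0, hf1, y, hy⟩ := (f x).2
  obtain ⟨hg0, hg1, -⟩ := (g x).2
  refine ⟨fun S => ?_, ?_, y, ?_⟩
  · have := hf0 S
    have := hg0 S
    simp only [Pi.add_apply, Pi.smul_apply, smul_eq_mul]
    positivity
  · simp only [Pi.add_apply, Pi.smul_apply, smul_eq_mul]
    rw [Finset.sum_add_distrib, ← Finset.mul_sum, ← Finset.mul_sum, hf1, hg1]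
    linarith
  · simp only [Set.mem_iInter, Set.mem_ofPred_eq] at hy ⊢
    intro S hS
    refine hy S fun h0 => hS ?_
    simp [h0, h x S h0]

/-- Unnormalized weights define a map to the nerve. -/
theorem exists_normalize [TopologicalSpace X] {A : ι → Set E} (u : X → ι → ℝ) (hu : Continuous u)
    (h0 : ∀ x S, 0 ≤ u x S) (hpos : ∀ x, ∃ S, u x S ≠ 0)
    (hA : ∀ x, ∃ y, ∀ S, u x S ≠ 0 → y ∈ A S) :
    ∃ f : C(X, realization A), ∀ x, ∃ c : ℝ, 0 < c ∧ ∀ S, (f x : ι → ℝ) S = c * u x S := by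
  have hsum : ∀ x, 0 < ∑ S, u x S := fun x => by
    obtain ⟨S, hS⟩ := hpos x
    exact Finset.sum_pos' (fun T _ => h0 x T)
      ⟨S, Finset.mem_univ _, lt_of_le_of_ne (h0 x S) (Ne.symm hS)⟩
  refine ⟨⟨fun x => ⟨fun S => (∑ T, u x T)⁻¹ * u x S, fun S => ?_, ?_, ?_⟩, ?_⟩, fun x =>
    ⟨_, inv_pos.2 (hsum x), fun S => rfl⟩⟩
  · exact mul_nonneg (inv_pos.2 (hsum x)).le (h0 x S)
  · rw [← Finset.mul_sum, inv_mul_cancel₀ (hsum x).ne']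
  · obtain ⟨y, hy⟩ := hA x
    refine ⟨y, ?_⟩
    simp only [Set.mem_iInter, Set.mem_ofPred_eq]
    exact fun S hS => hy S (right_ne_zero_of_mul hS)
  · have hu' : ∀ S, Continuous fun x => u x S := fun S => (continuous_apply S).comp hu
    refine Continuous.subtype_mk (continuous_pi fun S => ?_) _
    exact ((continuous_finsetSum _ fun T _ => hu' T).inv₀ fun x => (hsum x).ne').mul (hu' S)

theorem exists_dist [PseudoMetricSpace E] {s : Set E} (hs : IsClosed s) :
    ∃ d : E → ℝ, Continuous d ∧ (∀ x, 0 ≤ d x) ∧ ∀ x, d x = 0 ↔ x ∈ s := by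
  rcases s.eq_empty_or_nonempty with rfl | hne
  -- `Metric.infDist` to the empty set is `0`, so this case needs another function.
  · exact ⟨fun _ => 1, by fun_prop, by simp, by simp⟩
  · exact ⟨fun x => Metric.infDist x s, Metric.continuous_infDist_pt s,
      fun x => Metric.infDist_nonneg, fun x => (hs.mem_iff_infDist_zero hne).symm⟩

/-! ### From the union to the nerve -/

/-- A positive continuous radius `δ` such that the members of the family that are `δ x`-close to `x`
have a common point. -/
theorem exists_radius [TopologicalSpace E] {A : ι → Set E} (d : ι → E → ℝ)
    (hd : ∀ S, Continuous (d S)) (hd0 : ∀ S x, 0 ≤ d S x) (hdA : ∀ S x, d S x = 0 ↔ x ∈ A S) :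
    ∃ δ : E → ℝ, Continuous δ ∧ (∀ x, 0 < δ x) ∧ ∀ x, ∃ y, ∀ S, d S x < δ x → y ∈ A S := by
  classical
  -- For a `σ` without common point, the `d S` with `S ∈ σ` have positive sum, and they cannot all be
  -- smaller than this sum divided by `σ.card + 1`; the extra `1` keeps the denominator positive.
  let h : Finset ι → E → ℝ := fun σ x =>
    if ∃ y, ∀ S ∈ σ, y ∈ A S then 1 else (∑ S ∈ σ, d S x) / (σ.card + 1)
  have hh : ∀ σ, Continuous (h σ) := fun σ => by
    by_cases hσ : ∃ y, ∀ S ∈ σ, y ∈ A S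
    · simp only [h, if_pos hσ]; fun_prop
    · simp only [h, if_neg hσ]; fun_prop
  refine ⟨fun x => Finset.univ.inf' Finset.univ_nonempty fun σ => h σ x,
    Continuous.finset_inf'_apply _ fun σ _ => hh σ, fun x => ?_, fun x => ?_⟩
  · rw [Finset.lt_inf'_iff]
    intro σ _
    by_cases hσ : ∃ y, ∀ S ∈ σ, y ∈ A S
    · simp only [h, if_pos hσ]; norm_num
    · simp only [h, if_neg hσ]
      refine div_pos ?_ (by positivity)
      push Not at hσ
      obtain ⟨S, hS, hx⟩ := hσ x
      exact Finset.sum_pos' (fun T _ => hd0 T x)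
        ⟨S, hS, lt_of_le_of_ne (hd0 S x) fun h0 => hx ((hdA S x).1 h0.symm)⟩
  · set δ := Finset.univ.inf' Finset.univ_nonempty fun σ => h σ x with hδ
    by_contra hcon
    let σ : Finset ι := Finset.univ.filter fun S => d S x < δ
    have hσ : ¬ ∃ y, ∀ S ∈ σ, y ∈ A S := fun ⟨y, hy⟩ =>
      hcon ⟨y, fun S hS => hy S (Finset.mem_filter.2 ⟨Finset.mem_univ _, hS⟩)⟩
    have hle : δ ≤ h σ x := Finset.inf'_le _ (Finset.mem_univ σ)
    simp only [h, if_neg hσ] at hle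
    rw [le_div_iff₀ (by positivity)] at hle
    have hsum : ∑ S ∈ σ, d S x ≤ σ.card * δ := by
      rw [← nsmul_eq_mul]
      exact Finset.sum_le_card_nsmul _ _ _ fun S hS => (Finset.mem_filter.1 hS).2.le
    have hδ0 : δ ≤ 0 := by linarith
    have : ∀ S, ¬ S ∈ σ := fun S hS => by
      have := (Finset.mem_filter.1 hS).2
      linarith [hd0 S x]
    exact hσ ⟨x, fun S hS => absurd hS (this S)⟩

/-- The map from the union to the nerve; among the weights of its value at a point, those of the
members containing the point are maximal and nonzero. -/
theorem exists_toNerve [PseudoMetricSpace E] {A : ι → Set E} (hA : ∀ S, IsClosed (A S)) {U : Set E}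
    (hU : ∀ x ∈ U, ∃ S, x ∈ A S) :
    ∃ φ : C(U, realization A), ∀ (x : U) S, (x : E) ∈ A S →
      (φ x : ι → ℝ) S ≠ 0 ∧ ∀ T, (φ x : ι → ℝ) T ≤ (φ x : ι → ℝ) S := by
  choose d hd hd0 hdA using fun S => exists_dist (hA S)
  obtain ⟨δ, hδ, hδ0, hδA⟩ := exists_radius d hd hd0 hdA
  obtain ⟨φ, hφ⟩ := exists_normalize (A := A) (fun (x : U) S => max 0 (δ x - d S x))
    (by fun_prop) (fun x S => le_max_left _ _)
    (fun x => by
      obtain ⟨S, hS⟩ := hU x x.2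
      refine ⟨S, ?_⟩
      rw [(hdA S x).2 hS, sub_zero, max_eq_right (hδ0 x).le]
      exact (hδ0 x).ne')
    (fun x => by
      obtain ⟨y, hy⟩ := hδA x
      refine ⟨y, fun S hS => hy S ?_⟩
      by_contra hlt
      exact hS (max_eq_left (by linarith)))
  refine ⟨φ, fun x S hS => ?_⟩
  obtain ⟨c, hc, hcφ⟩ := hφ x
  have h1 : max 0 (δ x - d S x) = δ x := by
    rw [(hdA S x).2 hS, sub_zero, max_eq_right (hδ0 x).le]
  constructor
  · rw [hcφ, h1]
    exact (mul_pos hc (hδ0 x)).ne'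
  · intro T
    rw [hcφ, hcφ, h1]
    exact mul_le_mul_of_nonneg_left (max_le (hδ0 x).le (by linarith [hd0 T x])) hc.le

/-! ### From the nerve to the union -/

theorem exists_max {A : ι → Set E} (w : realization A) :
    ∃ S, (∀ T, (w : ι → ℝ) T ≤ (w : ι → ℝ) S) ∧ 0 < (w : ι → ℝ) S := by
  obtain ⟨h0, h1, -⟩ := w.2
  obtain ⟨T, -, hT⟩ : ∃ T ∈ Finset.univ, 0 < (w : ι → ℝ) T :=
    Finset.exists_lt_of_sum_lt (by simp [h1])
  have : Nonempty ι := ⟨T⟩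
  obtain ⟨S, hS⟩ := Finite.exists_max (w : ι → ℝ)
  exact ⟨S, hS, hT.trans_le (hS T)⟩

open Classical in
/-- A continuous coefficient which, at nonnegative `w`, is positive exactly when `σ` is a nonempty
superlevel set `{S | t < w S}` with `t ≥ 0`. -/
noncomputable def coeff (σ : Finset ι) (w : ι → ℝ) : ℝ :=
  (∑ S ∈ σ, w S) * (∏ S ∈ σ, w S) * ∏ S ∈ σ, ∏ T ∈ σᶜ, max 0 (w S - w T)

theorem continuous_coeff (σ : Finset ι) : Continuous (coeff σ) := by
  unfold coeff
  fun_prop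

theorem coeff_nonneg (σ : Finset ι) {w : ι → ℝ} (h : ∀ S, 0 ≤ w S) : 0 ≤ coeff σ w :=
  mul_nonneg (mul_nonneg (Finset.sum_nonneg fun S _ => h S) (Finset.prod_nonneg fun S _ => h S))
    (Finset.prod_nonneg fun _ _ => Finset.prod_nonneg fun _ _ => le_max_left _ _)

theorem mem_of_coeff_ne_zero {σ : Finset ι} {w : ι → ℝ} (h : coeff σ w ≠ 0) {S : ι}
    (hS : ∀ T, w T ≤ w S) : S ∈ σ := by
  classical
  by_contra hSσ
  obtain ⟨T, hT, -⟩ := Finset.exists_ne_zero_of_sum_ne_zero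
    (left_ne_zero_of_mul (left_ne_zero_of_mul h))
  have h2 := Finset.prod_ne_zero_iff.1 (Finset.prod_ne_zero_iff.1 (right_ne_zero_of_mul h) T hT) S
    (by simpa using hSσ)
  exact h2 (max_eq_left (by linarith [hS T]))

theorem ne_zero_of_coeff_ne_zero {σ : Finset ι} {w : ι → ℝ} (h : coeff σ w ≠ 0) {S : ι}
    (hS : S ∈ σ) : w S ≠ 0 :=
  Finset.prod_ne_zero_iff.1 (right_ne_zero_of_mul (left_ne_zero_of_mul h)) S hS

theorem exists_coeff_ne_zero {w : ι → ℝ} {M : ι} (hM : ∀ T, w T ≤ w M) (hM0 : 0 < w M) :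
    ∃ σ, coeff σ w ≠ 0 := by
  classical
  -- The indices of maximal weight form a superlevel set.
  refine ⟨Finset.univ.filter fun S => w S = w M, ?_⟩
  have hmem : ∀ S ∈ Finset.univ.filter (fun S => w S = w M), w S = w M := fun S hS =>
    (Finset.mem_filter.1 hS).2
  refine (mul_pos (mul_pos ?_ ?_) ?_).ne'
  · exact Finset.sum_pos (fun S hS => by rw [hmem S hS]; exact hM0) ⟨M, by simp⟩
  · exact Finset.prod_pos fun S hS => by rw [hmem S hS]; exact hM0
  · refine Finset.prod_pos fun S hS => Finset.prod_pos fun T hT => lt_max_of_lt_right ?_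
    rw [hmem S hS, sub_pos]
    exact lt_of_le_of_ne (hM T) (by simpa using hT)

/-- The map from the nerve to the union; its value lies in every member of maximal weight. -/
theorem exists_toUnion [AddCommGroup E] [Module ℝ E] [TopologicalSpace E] [ContinuousAdd E]
    [ContinuousSMul ℝ E] {A : ι → Set E} (hA : ∀ S, Convex ℝ (A S)) {U : Set E}
    (hU : ∀ S, A S ⊆ U) :
    ∃ ψ : C(realization A, U), ∀ (w : realization A) S,
      (∀ T, (w : ι → ℝ) T ≤ (w : ι → ℝ) S) → (ψ w : E) ∈ A S := by
  classical
  have hP : ∀ σ : Finset ι, ∃ y : E, (∃ z, ∀ S ∈ σ, z ∈ A S) → ∀ S ∈ σ, y ∈ A S := fun σ => by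
    by_cases h : ∃ z, ∀ S ∈ σ, z ∈ A S
    · exact ⟨h.choose, fun _ => h.choose_spec⟩
    · exact ⟨0, fun h' => absurd h' h⟩
  choose P hP using hP
  let f : realization A → E := fun w => Finset.univ.centerMass (fun σ => coeff σ (w : ι → ℝ)) P
  have hpos : ∀ w : realization A, 0 < ∑ σ, coeff σ (w : ι → ℝ) := fun w => by
    obtain ⟨M, hM, hM0⟩ := exists_max w
    obtain ⟨σ, hσ⟩ := exists_coeff_ne_zero hM hM0
    exact Finset.sum_pos' (fun τ _ => coeff_nonneg τ w.2.1)
      ⟨σ, Finset.mem_univ _, lt_of_le_of_ne (coeff_nonneg σ w.2.1) hσ.symm⟩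
  have hf : Continuous f := by
    have hc : ∀ σ, Continuous fun w : realization A => coeff σ (w : ι → ℝ) := fun σ =>
      (continuous_coeff σ).comp continuous_subtype_val
    exact ((continuous_finsetSum _ fun σ _ => hc σ).inv₀ fun w => (hpos w).ne').smul
      (continuous_finsetSum _ fun σ _ => (hc σ).smul continuous_const)
  have hmem : ∀ (w : realization A) S, (∀ T, (w : ι → ℝ) T ≤ (w : ι → ℝ) S) → f w ∈ A S := by
    intro w S hS
    obtain ⟨y, hy⟩ := w.2.2.2
    simp only [Set.mem_iInter, Set.mem_ofPred_eq] at hy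
    simp only [f]
    rw [← Finset.centerMass_filter_ne_zero]
    refine (hA S).centerMass_mem (fun σ _ => coeff_nonneg σ w.2.1) ?_ fun σ hσ => ?_
    · rw [Finset.sum_filter_ne_zero]
      exact hpos w
    · have hσ0 := (Finset.mem_filter.1 hσ).2
      exact hP σ ⟨y, fun T hT => hy T (ne_zero_of_coeff_ne_zero hσ0 hT)⟩ S
        (mem_of_coeff_ne_zero hσ0 hS)
  have hfU : ∀ w, f w ∈ U := fun w => by
    obtain ⟨M, hM, -⟩ := exists_max w
    exact hU M (hmem w M hM)
  exact ⟨⟨fun w => ⟨f w, hfU w⟩, hf.subtype_mk hfU⟩, hmem⟩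

/-! ### The homotopy equivalence -/

/-- The nerve theorem for an indexed finite family. -/
theorem nonempty_homotopyEquiv [NormedAddCommGroup E] [NormedSpace ℝ E] {A : ι → Set E}
    (hclosed : ∀ S, IsClosed (A S)) (hconv : ∀ S, Convex ℝ (A S)) {U : Set E}
    (hU : ∀ x, x ∈ U ↔ ∃ S, x ∈ A S) :
    Nonempty (ContinuousMap.HomotopyEquiv (realization A) U) := by
  obtain ⟨φ, hφ⟩ := exists_toNerve hclosed fun x hx => (hU x).1 hx
  obtain ⟨ψ, hψ⟩ := exists_toUnion hconv fun S x hx => (hU x).2 ⟨S, hx⟩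
  refine ⟨⟨ψ, φ, ?_, ?_⟩⟩
  · obtain ⟨g, hg⟩ := exists_normalize (A := A)
      (fun (w : realization A) S => (w : ι → ℝ) S * (φ (ψ w) : ι → ℝ) S)
      (continuous_subtype_val.mul (continuous_subtype_val.comp (φ.comp ψ).continuous))
      (fun w S => mul_nonneg (w.2.1 S) ((φ (ψ w)).2.1 S))
      (fun w => by
        obtain ⟨M, hM, hM0⟩ := exists_max w
        exact ⟨M, mul_ne_zero hM0.ne' (hφ (ψ w) M (hψ w M hM)).1⟩)
      (fun w => by
        obtain ⟨y, hy⟩ := w.2.2.2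
        simp only [Set.mem_iInter, Set.mem_ofPred_eq] at hy
        exact ⟨y, fun S hS => hy S (left_ne_zero_of_mul hS)⟩)
    have h1 : (ContinuousMap.id _).Homotopic g := homotopic_of_support _ _ fun w S h => by
      obtain ⟨c, -, hc⟩ := hg w
      rw [ContinuousMap.id_apply] at h
      rw [hc, h, zero_mul, mul_zero]
    have h2 : (φ.comp ψ).Homotopic g := homotopic_of_support _ _ fun w S h => by
      obtain ⟨c, -, hc⟩ := hg w
      rw [ContinuousMap.comp_apply] at h
      rw [hc, h, mul_zero, mul_zero]
    exact h2.trans h1.symm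
  · refine homotopic_of_segment _ _ fun x => ?_
    obtain ⟨S, hS⟩ := (hU x).1 x.2
    have h : ((ψ.comp φ) x : E) ∈ A S := hψ (φ x) S (hφ x S hS).2
    exact fun y hy => (hU y).2 ⟨S, (hconv S).segment_subset h hS hy⟩

end ConvexNerve

/-- Edelsbrunner–Harer nerve theorem (statement): for a finite family F of
closed convex subsets of ℝⁿ, the geometric realization of the nerve of F
(realized as the subspace of the standard simplex on vertex set F consisting
of weight functions whose support is a simplex of the nerve, i.e. a subfamily
with nonempty intersection) is homotopy equivalent to the union ⋃ F. -/
theorem nerve_theorem {n : ℕ} (F : Finset (Set (EuclideanSpace ℝ (Fin n))))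
    (hclosed : ∀ S ∈ F, IsClosed S) (hconv : ∀ S ∈ F, Convex ℝ S) :
    Nonempty (ContinuousMap.HomotopyEquiv
      {w : F → ℝ // (∀ S, 0 ≤ w S) ∧ (∑ S, w S = 1) ∧
        (⋂ S ∈ {S : F | w S ≠ 0}, (S : Set (EuclideanSpace ℝ (Fin n)))).Nonempty}
      (⋃ S ∈ F, S)) := by
  exact ConvexNerve.nonempty_homotopyEquiv (A := fun S : F => (S : Set (EuclideanSpace ℝ (Fin n))))
    (fun S => hclosed S S.2) (fun S => hconv S S.2) (fun x => by simp)
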